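/- Let f : ℝ^d → ℝ be G-Lipschitz and Γ-invariant for an r-dimensional subspace Γ. Then for every k and every i ∈ [k], the k-fold smoothed function S_{δ,Γ}^k f is k-times differentiable and its i-th derivative is (r/δ)^i · G Lipschitz: ‖∇^i S_{δ,Γ}^k f(x) − ∇^i S_{δ,Γ}^k f(y)‖ ≤ (r/δ)^i G ‖x − y‖, where the norm is the induced operator norm. -/

import Mathlib

open MeasureTheory

/-- Subspace smoothing operator: average of `f` over `x + δ v` with `v` uniform in the
unit ball of the subspace `Γ`. -/
noncomputable def subSmooth {d : ℕ} (δ : ℝ) (Γ : Submodule ℝ (EuclideanSpace ℝ (Fin d)))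
    (f : EuclideanSpace ℝ (Fin d) → ℝ) : EuclideanSpace ℝ (Fin d) → ℝ :=
  fun x => ⨍ v in Metric.closedBall (0 : Γ) 1, f (x + δ • (v : EuclideanSpace ℝ (Fin d)))

/-! A `Γ`-invariant function factors as `f = g ∘ P`, where `P` is the orthogonal projection onto `Γ`
and `g` is the restriction of `f` to `Γ`, and smoothing `f` along `Γ` amounts to averaging `g` over
the balls of radius `δ` of the `r`-dimensional space `Γ`. Two balls of radius `δ` whose centres are
at distance `s` differ by at most a fraction `r s / (2 δ)` of their volume on either side: this is
Bernoulli's inequality applied to the ball of radius `δ - s / 2` about the midpoint of the centres.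
Hence averaging turns a function bounded by `M` into an `(r / δ) M`-Lipschitz one. By Rademacher's
theorem averaging commutes with differentiation on Lipschitz functions, so that each further
average buys one more derivative, at the price of a factor `r / δ`. -/

open Metric Module
open scoped NNReal

section IteratedFDeriv

variable {𝕜 E F G : Type*} [NontriviallyNormedField 𝕜] [NormedAddCommGroup E] [NormedSpace 𝕜 E]
  [NormedAddCommGroup F] [NormedSpace 𝕜 F] [NormedAddCommGroup G] [NormedSpace 𝕜 G]
  {f : E → F} {C : ℝ≥0}

theorem lipschitzWith_iteratedFDeriv_zero_iff :
    LipschitzWith C (iteratedFDeriv 𝕜 0 f) ↔ LipschitzWith C f := by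
  rw [iteratedFDeriv_zero_eq_comp]
  exact (LinearIsometryEquiv.isometry _).lipschitzWith_iff C

theorem lipschitzWith_iteratedFDeriv_succ_iff {n : ℕ} :
    LipschitzWith C (iteratedFDeriv 𝕜 (n + 1) f) ↔
      LipschitzWith C (iteratedFDeriv 𝕜 n (fderiv 𝕜 f)) := by
  have hcurry : iteratedFDeriv 𝕜 (n + 1) f =
      (continuousMultilinearCurryRightEquiv' 𝕜 n E F).symm ∘ iteratedFDeriv 𝕜 n (fderiv 𝕜 f) :=
    funext fun x => iteratedFDeriv_succ_eq_comp_right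
  rw [hcurry]
  exact (LinearIsometryEquiv.isometry _).lipschitzWith_iff C

theorem lipschitzWith_iteratedFDeriv_comp_clm {n : ℕ} (hf : ContDiff 𝕜 n f)
    (hlip : LipschitzWith C (iteratedFDeriv 𝕜 n f)) (A : G →L[𝕜] E) :
    LipschitzWith (‖A‖₊ ^ (n + 1) * C) (iteratedFDeriv 𝕜 n (f ∘ A)) := by
  have hcomp : iteratedFDeriv 𝕜 n (f ∘ A) =
      ContinuousMultilinearMap.compContinuousLinearMapL (fun _ => A) ∘ iteratedFDeriv 𝕜 n f ∘ A :=
    funext fun x => A.iteratedFDeriv_comp_right hf x le_rfl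
  have hnorm : ‖ContinuousMultilinearMap.compContinuousLinearMapL (F := F)
      fun _ : Fin n => A‖₊ ≤ ‖A‖₊ ^ n := by
    simpa [← NNReal.coe_le_coe] using
      ContinuousMultilinearMap.norm_compContinuousLinearMapL_le F fun _ : Fin n => A
  rw [hcomp, pow_succ, mul_assoc, mul_comm ‖A‖₊]
  exact ((ContinuousLinearMap.lipschitz _).weaken hnorm).comp (hlip.comp A.lipschitz)

end IteratedFDeriv

section SetIntegral

variable {α V : Type*} [MeasurableSpace α] {μ : Measure α} [NormedAddCommGroup V]
  [NormedSpace ℝ V] {f : α → V} {M : ℝ≥0}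

theorem norm_average_le_of_norm_le_const [IsFiniteMeasure μ] (hf : ∀ᵐ x ∂μ, ‖f x‖ ≤ M) :
    ‖⨍ x, f x ∂μ‖ ≤ M := by
  rw [average_eq, norm_smul, norm_inv, Real.norm_of_nonneg measureReal_nonneg]
  refine inv_mul_le_of_le_mul₀ measureReal_nonneg M.coe_nonneg ?_
  exact (norm_integral_le_of_norm_le_const hf).trans_eq (mul_comm _ _)

theorem norm_setIntegral_sub_setIntegral_le {s t : Set α} (hs : MeasurableSet s)
    (ht : MeasurableSet t) (hμs : μ s < ⊤) (hμt : μ t < ⊤) (hfs : IntegrableOn f s μ)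
    (hft : IntegrableOn f t μ) (hM : ∀ x, ‖f x‖ ≤ M) :
    ‖∫ x in s, f x ∂μ - ∫ x in t, f x ∂μ‖ ≤ M * (μ.real (s \ t) + μ.real (t \ s)) := by
  rw [← integral_inter_add_sdiff ht hfs, ← integral_inter_add_sdiff hs hft, Set.inter_comm,
    add_sub_add_left_eq_sub, mul_add]
  exact (norm_sub_le _ _).trans (add_le_add
    (norm_setIntegral_le_of_norm_le_const ((measure_mono Set.sdiff_subset).trans_lt hμs)
      fun x _ => hM x)
    (norm_setIntegral_le_of_norm_le_const ((measure_mono Set.sdiff_subset).trans_lt hμt)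
      fun x _ => hM x))

end SetIntegral

section BallVolume

theorem closedBall_midpoint_subset_inter {E : Type*} [SeminormedAddCommGroup E]
    [NormedSpace ℝ E] (x y : E) (δ : ℝ) :
    closedBall (midpoint ℝ x y) (δ - dist x y / 2) ⊆ closedBall x δ ∩ closedBall y δ := by
  refine Set.subset_inter (closedBall_subset_closedBall' ?_) (closedBall_subset_closedBall' ?_)
  · rw [dist_midpoint_left, Real.norm_two]
    linarith
  · rw [dist_midpoint_right, Real.norm_two]
    linarith

variable {E : Type*} [NormedAddCommGroup E] [NormedSpace ℝ E] [FiniteDimensional ℝ E]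
  [MeasurableSpace E] [BorelSpace E] (μ : Measure E) [μ.IsAddHaarMeasure] {δ : ℝ}

theorem one_sub_mul_measureReal_closedBall_le_measureReal_inter (hδ : 0 < δ) {x y : E}
    (hxy : dist x y ≤ 2 * δ) :
    (1 - finrank ℝ E * (dist x y / (2 * δ))) * μ.real (closedBall 0 δ) ≤
      μ.real (closedBall x δ ∩ closedBall y δ) := by
  set t : ℝ := dist x y / (2 * δ) with ht
  have ht1 : t ≤ 1 := div_le_one_of_le₀ hxy (by positivity)
  have hradius : δ - dist x y / 2 = (1 - t) * δ := by
    rw [ht]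
    field_simp
  calc (1 - finrank ℝ E * t) * μ.real (closedBall 0 δ)
      ≤ (1 - t) ^ finrank ℝ E * μ.real (closedBall 0 δ) := by
        gcongr
        simpa [← sub_eq_add_neg] using
          one_add_mul_le_pow (a := -t) (by linarith) (finrank ℝ E)
    _ = μ.real (closedBall (midpoint ℝ x y) (δ - dist x y / 2)) := by
        rw [hradius, Measure.addHaar_real_closedBall' μ _ hδ.le,
          Measure.addHaar_real_closedBall' μ _ (mul_nonneg (sub_nonneg.2 ht1) hδ.le), mul_pow,
          mul_assoc]
    _ ≤ μ.real (closedBall x δ ∩ closedBall y δ) :=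
        measureReal_mono (closedBall_midpoint_subset_inter x y δ)
          (measure_ne_top_of_subset Set.inter_subset_left measure_closedBall_lt_top.ne)

theorem measureReal_closedBall_sdiff_closedBall_le (hδ : 0 < δ) (x y : E) :
    μ.real (closedBall x δ \ closedBall y δ) ≤
      finrank ℝ E * (dist x y / (2 * δ)) * μ.real (closedBall 0 δ) := by
  rcases le_or_gt (dist x y) (2 * δ) with hclose | hfar
  · have hinter := one_sub_mul_measureReal_closedBall_le_measureReal_inter μ hδ hclose
    have hsplit := measureReal_inter_add_sdiff (μ := μ) (s := closedBall x δ)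
      (t := closedBall y δ) measurableSet_closedBall measure_closedBall_lt_top.ne
    rw [Measure.addHaar_real_closedBall_center μ x] at hsplit
    linarith
  · have : Nontrivial E := ⟨x, y, dist_pos.1 ((by positivity : 0 < 2 * δ).trans hfar)⟩
    have hdim : (1 : ℝ) ≤ finrank ℝ E := by exact_mod_cast finrank_pos (R := ℝ) (M := E)
    have hfrac : 1 ≤ dist x y / (2 * δ) := (one_le_div₀ (by positivity)).2 hfar.le
    calc μ.real (closedBall x δ \ closedBall y δ)
        ≤ μ.real (closedBall x δ) :=
          measureReal_mono Set.sdiff_subset measure_closedBall_lt_top.ne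
      _ = 1 * μ.real (closedBall 0 δ) := by
          rw [Measure.addHaar_real_closedBall_center, one_mul]
      _ ≤ finrank ℝ E * (dist x y / (2 * δ)) * μ.real (closedBall 0 δ) := by
          gcongr
          exact one_le_mul_of_one_le_of_one_le hdim hfrac

end BallVolume

section BallAverage

variable {E V : Type*} [NormedAddCommGroup V] [NormedSpace ℝ V] {δ L M : ℝ≥0} {F : E → V}

/-- The ball average of `F`: its mean value over the closed ball of radius `δ` about each point. -/
noncomputable def ballAverage [PseudoMetricSpace E] [MeasurableSpace E] (μ : Measure E) (δ : ℝ)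
    (F : E → V) : E → V :=
  fun x => ⨍ y in closedBall x δ, F y ∂μ

theorem norm_ballAverage_le [PseudoMetricSpace E] [ProperSpace E] [MeasurableSpace E]
    {μ : Measure E} [IsFiniteMeasureOnCompacts μ] (hM : ∀ x, ‖F x‖ ≤ M) (x : E) :
    ‖ballAverage μ δ F x‖ ≤ M :=
  have : IsFiniteMeasure (μ.restrict (closedBall x δ)) :=
    isFiniteMeasure_restrict.2 measure_closedBall_lt_top.ne
  norm_average_le_of_norm_le_const (.of_forall hM)

variable [NormedAddCommGroup E] [MeasurableSpace E] [BorelSpace E] {μ : Measure E}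
  [μ.IsAddHaarMeasure]

theorem ballAverage_apply_eq_setAverage_closedBall_zero (F : E → V) (x : E) :
    ballAverage μ δ F x = ⨍ v in closedBall (0 : E) δ, F (x + v) ∂μ := by
  rw [ballAverage, setAverage_eq, setAverage_eq, Measure.addHaar_real_closedBall_center,
    ← (measurePreserving_add_left μ x).setIntegral_preimage_emb
      (measurableEmbedding_addLeft x) F, preimage_add_closedBall, sub_self]

variable [NormedSpace ℝ E] [FiniteDimensional ℝ E]

theorem ballAverage_apply_eq_setAverage_unitClosedBall (hδ : 0 < δ) (F : E → V) (x : E) :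
    ballAverage μ δ F x = ⨍ v in closedBall (0 : E) 1, F (x + (δ : ℝ) • v) ∂μ := by
  have hδ' : (0 : ℝ) < δ := hδ
  have hscale := Measure.setIntegral_comp_smul_of_pos μ (fun v => F (x + v)) (closedBall 0 1) hδ'
  rw [smul_unitClosedBall_of_nonneg hδ'.le] at hscale
  rw [ballAverage_apply_eq_setAverage_closedBall_zero, setAverage_eq, setAverage_eq, hscale,
    smul_smul, ← mul_inv, mul_comm _ ((δ : ℝ) ^ _), Measure.addHaar_real_closedBall' μ 0 hδ'.le]

theorem lipschitzWith_ballAverage_of_norm_le (hδ : 0 < δ) (hF : LocallyIntegrable F μ)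
    (hM : ∀ x, ‖F x‖ ≤ M) : LipschitzWith (finrank ℝ E / δ * M) (ballAverage μ δ F) := by
  refine lipschitzWith_iff_norm_sub_le.2 fun x y => ?_
  have hδ' : (0 : ℝ) < δ := hδ
  have hint (z : E) : IntegrableOn F (closedBall z δ) μ :=
    hF.integrableOn_isCompact (isCompact_closedBall z δ)
  set vol := μ.real (closedBall (0 : E) δ) with hvol
  have hdiff := norm_setIntegral_sub_setIntegral_le measurableSet_closedBall
    measurableSet_closedBall measure_closedBall_lt_top measure_closedBall_lt_top
    (hint x) (hint y) hM
  have hxy := measureReal_closedBall_sdiff_closedBall_le μ hδ' x y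
  have hyx := measureReal_closedBall_sdiff_closedBall_le μ hδ' y x
  rw [dist_comm y x] at hyx
  rw [ballAverage, ballAverage, setAverage_eq, setAverage_eq,
    Measure.addHaar_real_closedBall_center, Measure.addHaar_real_closedBall_center μ y,
    ← smul_sub, norm_smul, norm_inv, Real.norm_of_nonneg measureReal_nonneg, ← hvol]
  refine inv_mul_le_of_le_mul₀ measureReal_nonneg (by positivity) ?_
  calc ‖∫ z in closedBall x δ, F z ∂μ - ∫ z in closedBall y δ, F z ∂μ‖
      ≤ M * (finrank ℝ E * (dist x y / (2 * δ)) * vol +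
          finrank ℝ E * (dist x y / (2 * δ)) * vol) := hdiff.trans (by gcongr)
    _ = vol * (↑(finrank ℝ E / δ * M) * ‖x - y‖) := by
        push_cast
        rw [dist_eq_norm]
        field_simp
        ring

variable [FiniteDimensional ℝ V]

theorem hasFDerivAt_ballAverage (hF : LipschitzWith L F) (x : E) :
    HasFDerivAt (ballAverage μ δ F) (ballAverage μ δ (fderiv ℝ F) x) x := by
  have hint (z : E) : IntegrableOn (fun v => F (z + v)) (closedBall 0 δ) μ :=
    (hF.continuous.comp (continuous_const_add z)).continuousOn.integrableOn_compact
      (isCompact_closedBall 0 _)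
  have hmeas : AEStronglyMeasurable (fun v => fderiv ℝ F (x + v))
      (μ.restrict (closedBall 0 δ)) := by
    borelize (E →L[ℝ] V)
    exact ((measurable_fderiv ℝ F).comp (measurable_const_add x)).aestronglyMeasurable
  have hlip (v : E) : LipschitzWith L fun z => F (z + v) := by
    simpa using! hF.comp (isometry_add_right v).lipschitz
  have hdiff : ∀ᵐ v ∂μ.restrict (closedBall 0 δ),
      HasFDerivAt (fun z => F (z + v)) (fderiv ℝ F (x + v)) x := by
    filter_upwards [ae_restrict_of_ae ((measurePreserving_add_left μ x).quasiMeasurePreserving.ae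
      hF.ae_differentiableAt)] with v hv
    exact (hasFDerivAt_comp_add_right v).2 hv.hasFDerivAt
  have hderiv := (hasFDerivAt_integral_of_dominated_loc_of_lip (bound := fun _ => (L : ℝ))
    Filter.univ_mem (.of_forall fun z => (hint z).aestronglyMeasurable) (hint x) hmeas
    (.of_forall fun v => by simpa using hlip v)
    (integrableOn_const measure_closedBall_lt_top.ne) hdiff).2
  simp only [funext (ballAverage_apply_eq_setAverage_closedBall_zero (μ := μ) (δ := δ) F),
    ballAverage_apply_eq_setAverage_closedBall_zero, setAverage_eq]
  exact hderiv.const_smul _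

theorem locallyIntegrable_fderiv (hF : LipschitzWith L F) : LocallyIntegrable (fderiv ℝ F) μ := by
  borelize (E →L[ℝ] V)
  refine (locallyIntegrable_const (L : ℝ)).mono
    (measurable_fderiv ℝ F).aestronglyMeasurable (.of_forall fun x => ?_)
  simpa using norm_fderiv_le_of_lipschitz ℝ hF

theorem fderiv_ballAverage (hF : LipschitzWith L F) :
    fderiv ℝ (ballAverage μ δ F) = ballAverage μ δ (fderiv ℝ F) :=
  funext fun x => (hasFDerivAt_ballAverage hF x).fderiv

theorem differentiable_ballAverage (hF : LipschitzWith L F) :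
    Differentiable ℝ (ballAverage μ δ F) :=
  fun x => (hasFDerivAt_ballAverage hF x).differentiableAt

theorem lipschitzWith_ballAverage (hF : LipschitzWith L F) :
    LipschitzWith L (ballAverage μ δ F) :=
  lipschitzWith_of_nnnorm_fderiv_le (differentiable_ballAverage hF) fun x => by
    rw [fderiv_ballAverage hF]
    exact norm_ballAverage_le (fun _ => norm_fderiv_le_of_lipschitz ℝ hF) x

theorem lipschitzWith_fderiv_ballAverage (hδ : 0 < δ) (hF : LipschitzWith L F) :
    LipschitzWith (finrank ℝ E / δ * L) (fderiv ℝ (ballAverage μ δ F)) := by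
  rw [fderiv_ballAverage hF]
  exact lipschitzWith_ballAverage_of_norm_le hδ (locallyIntegrable_fderiv hF)
    fun _ => norm_fderiv_le_of_lipschitz ℝ hF

theorem lipschitzWith_iterate_ballAverage (hF : LipschitzWith L F) (k : ℕ) :
    LipschitzWith L ((ballAverage μ δ)^[k] F) :=
  Function.Iterate.rec (LipschitzWith L) hF (fun _ hH => lipschitzWith_ballAverage hH) k

theorem fderiv_iterate_ballAverage (hF : LipschitzWith L F) (k : ℕ) :
    fderiv ℝ ((ballAverage μ δ)^[k] F) = (ballAverage μ δ)^[k] (fderiv ℝ F) := by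
  induction k with
  | zero => rfl
  | succ k ih =>
    rw [Function.iterate_succ_apply', Function.iterate_succ_apply', ← ih,
      fderiv_ballAverage (lipschitzWith_iterate_ballAverage hF k)]

theorem fderiv_iterate_succ_ballAverage (hF : LipschitzWith L F) (k : ℕ) :
    fderiv ℝ ((ballAverage μ δ)^[k + 1] F) =
      (ballAverage μ δ)^[k] (fderiv ℝ (ballAverage μ δ F)) :=
  fderiv_iterate_ballAverage (lipschitzWith_ballAverage hF) k

end BallAverage

universe u v

-- The universe of `V` is closed under `V ↦ E →L[ℝ] V`, as the inductions below require.
section IterateBallAverage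

variable {E : Type u} {V : Type max u v} [NormedAddCommGroup E] [NormedSpace ℝ E]
  [FiniteDimensional ℝ E] [MeasurableSpace E] [BorelSpace E] {μ : Measure E} [μ.IsAddHaarMeasure]
  [NormedAddCommGroup V] [NormedSpace ℝ V] [FiniteDimensional ℝ V] {δ L : ℝ≥0} {F : E → V}

theorem contDiff_iterate_ballAverage (hδ : 0 < δ) (hF : LipschitzWith L F) (k : ℕ) :
    ContDiff ℝ k ((ballAverage μ δ)^[k] F) := by
  induction k generalizing V L with
  | zero => exact contDiff_zero.2 hF.continuous
  | succ k ih =>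
    rw [Nat.cast_succ, contDiff_succ_iff_fderiv]
    refine ⟨?_, by simp, ?_⟩
    · rw [Function.iterate_succ_apply']
      exact differentiable_ballAverage (lipschitzWith_iterate_ballAverage hF k)
    · rw [fderiv_iterate_succ_ballAverage hF]
      exact ih (lipschitzWith_fderiv_ballAverage hδ hF)

theorem lipschitzWith_iteratedFDeriv_iterate_ballAverage (hδ : 0 < δ) (hF : LipschitzWith L F)
    {i k : ℕ} (hik : i ≤ k) :
    LipschitzWith ((finrank ℝ E / δ) ^ i * L) (iteratedFDeriv ℝ i ((ballAverage μ δ)^[k] F)) := by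
  induction i generalizing V L k with
  | zero =>
    rw [lipschitzWith_iteratedFDeriv_zero_iff, pow_zero, one_mul]
    exact lipschitzWith_iterate_ballAverage hF k
  | succ i ih =>
    obtain ⟨k, rfl⟩ := Nat.exists_eq_add_one_of_ne_zero (Nat.ne_zero_of_lt hik)
    rw [lipschitzWith_iteratedFDeriv_succ_iff, fderiv_iterate_succ_ballAverage hF, pow_succ,
      mul_assoc]
    exact ih (lipschitzWith_fderiv_ballAverage hδ hF) (Nat.le_of_succ_le_succ hik)

end IterateBallAverage

section SubspaceBallAverage

variable {E : Type u} [NormedAddCommGroup E] [InnerProductSpace ℝ E] {Γ : Submodule ℝ E}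

theorem eq_comp_orthogonalProjectionOnto_of_forall_add_eq {β : Type*}
    [Γ.HasOrthogonalProjection] {f : E → β} (hinv : ∀ x, ∀ y ∈ Γᗮ, f (x + y) = f x) :
    f = (f ∘ Γ.subtype) ∘ Γ.orthogonalProjectionOnto :=
  funext fun x => by
    have h := hinv (Γ.starProjection x) _ (Γ.sub_starProjection_mem_orthogonal x)
    rwa [add_sub_cancel] at h

variable [FiniteDimensional ℝ Γ] [MeasurableSpace E] [BorelSpace E]

/-- The smoothing operator `S_{δ,Γ}` on functions from an inner product space to a normed space:
the mean value over `x + δ v` for `v` in the unit ball of the subspace `Γ`. It extends `subSmooth`,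
which is the case of real-valued functions on a Euclidean space. -/
noncomputable def subspaceBallAverage {V : Type*} [NormedAddCommGroup V] [NormedSpace ℝ V] (δ : ℝ)
    (Γ : Submodule ℝ E) [FiniteDimensional ℝ Γ] (f : E → V) : E → V :=
  fun x => ⨍ v in closedBall (0 : Γ) 1, f (x + δ • (v : E))

theorem semiconj_comp_orthogonalProjectionOnto_ballAverage {V : Type*} [NormedAddCommGroup V]
    [NormedSpace ℝ V] {δ : ℝ≥0} (hδ : 0 < δ) :
    Function.Semiconj (fun g : Γ → V => g ∘ Γ.orthogonalProjectionOnto)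
      (ballAverage volume δ) (subspaceBallAverage δ Γ) := fun g => by
  ext x
  simp only [subspaceBallAverage, Function.comp_apply, map_add, map_smul,
    ballAverage_apply_eq_setAverage_unitClosedBall hδ,
    Submodule.orthogonalProjectionOnto_mem_subspace_eq_self]

theorem iterate_subspaceBallAverage_eq_comp {V : Type*} [NormedAddCommGroup V] [NormedSpace ℝ V]
    {δ : ℝ≥0} (hδ : 0 < δ) {f : E → V} (hinv : ∀ x, ∀ y ∈ Γᗮ, f (x + y) = f x) (k : ℕ) :
    (subspaceBallAverage δ Γ)^[k] f =
      (ballAverage volume δ)^[k] (f ∘ Γ.subtype) ∘ Γ.orthogonalProjectionOnto := by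
  rw [((semiconj_comp_orthogonalProjectionOnto_ballAverage hδ).iterate_right k).eq,
    ← eq_comp_orthogonalProjectionOnto_of_forall_add_eq hinv]

variable {V : Type max u v} [NormedAddCommGroup V] [NormedSpace ℝ V] [FiniteDimensional ℝ V]
  {L : ℝ≥0} {f : E → V}

theorem contDiff_iterate_subspaceBallAverage {δ : ℝ≥0} (hδ : 0 < δ) (hf : LipschitzWith L f)
    (hinv : ∀ x, ∀ y ∈ Γᗮ, f (x + y) = f x) (k : ℕ) :
    ContDiff ℝ k ((subspaceBallAverage δ Γ)^[k] f) := by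
  rw [iterate_subspaceBallAverage_eq_comp hδ hinv]
  exact (contDiff_iterate_ballAverage hδ (hf.comp Γ.subtypeₗᵢ.lipschitz) k).comp
    Γ.orthogonalProjectionOnto.contDiff

theorem lipschitzWith_iteratedFDeriv_iterate_subspaceBallAverage {δ : ℝ≥0} (hδ : 0 < δ)
    (hf : LipschitzWith L f) (hinv : ∀ x, ∀ y ∈ Γᗮ, f (x + y) = f x) {i k : ℕ} (hik : i ≤ k) :
    LipschitzWith ((finrank ℝ Γ / δ) ^ i * L)
      (iteratedFDeriv ℝ i ((subspaceBallAverage δ Γ)^[k] f)) := by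
  have hrestrict : LipschitzWith L (f ∘ Γ.subtype) := by
    simpa using! hf.comp Γ.subtypeₗᵢ.lipschitz
  have hsmooth : ContDiff ℝ i ((ballAverage volume δ)^[k] (f ∘ Γ.subtype)) :=
    (contDiff_iterate_ballAverage hδ hrestrict k).of_le (by exact_mod_cast hik)
  have hproj : ‖Γ.orthogonalProjectionOnto‖₊ ^ (i + 1) ≤ 1 :=
    pow_le_one₀ zero_le (Submodule.orthogonalProjectionOnto_norm_le Γ)
  rw [iterate_subspaceBallAverage_eq_comp hδ hinv]
  exact (lipschitzWith_iteratedFDeriv_comp_clm hsmooth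
    (lipschitzWith_iteratedFDeriv_iterate_ballAverage hδ hrestrict hik) _).weaken
    (mul_le_of_le_one_left zero_le hproj)

theorem stmt8_general (k : ℕ) {G δ : ℝ} (hδ : 0 < δ)
    (hf : ∀ x y, ‖f x - f y‖ ≤ G * ‖x - y‖) (hinv : ∀ x, ∀ y ∈ Γᗮ, f (x + y) = f x) :
    ContDiff ℝ k ((subspaceBallAverage δ Γ)^[k] f) ∧
      ∀ i ≤ k, ∀ x y,
        ‖iteratedFDeriv ℝ i ((subspaceBallAverage δ Γ)^[k] f) x -
          iteratedFDeriv ℝ i ((subspaceBallAverage δ Γ)^[k] f) y‖ ≤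
        (finrank ℝ Γ / δ) ^ i * G * ‖x - y‖ := by
  have hlip : LipschitzWith G.toNNReal f := lipschitzWith_iff_norm_sub_le.2 fun x y =>
    (hf x y).trans (by gcongr; exact Real.le_coe_toNNReal G)
  lift δ to ℝ≥0 using hδ.le
  rw [NNReal.coe_pos] at hδ
  refine ⟨contDiff_iterate_subspaceBallAverage hδ hlip hinv k, fun i hik x y => ?_⟩
  obtain rfl | hxy := eq_or_ne x y
  · simp
  · have hG : 0 ≤ G :=
      nonneg_of_mul_nonneg_left ((norm_nonneg _).trans (hf x y)) (norm_sub_pos_iff.2 hxy)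
    simpa [hG] using lipschitzWith_iff_norm_sub_le.1
      (lipschitzWith_iteratedFDeriv_iterate_subspaceBallAverage hδ hlip hinv hik) x y

end SubspaceBallAverage

/-- The `k`-fold iterated subspace smoothing of a `G`-Lipschitz `Γ`-invariant function is
`k`-times differentiable, and for every `i ∈ [k]` its `i`-th derivative is
`(r/δ)^i G`-Lipschitz in operator norm. -/
theorem stmt8 (d r k : ℕ) (Γ : Submodule ℝ (EuclideanSpace ℝ (Fin d)))
    (hΓ : Module.finrank ℝ Γ = r) (G δ : ℝ) (hδ : 0 < δ)
    (f : EuclideanSpace ℝ (Fin d) → ℝ)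
    (hf : ∀ x y, |f x - f y| ≤ G * ‖x - y‖)
    (hinv : ∀ x : EuclideanSpace ℝ (Fin d), ∀ y ∈ Γᗮ, f (x + y) = f x) :
    ContDiff ℝ k ((subSmooth δ Γ)^[k] f) ∧
      ∀ i, 1 ≤ i → i ≤ k → ∀ x y,
        ‖iteratedFDeriv ℝ i ((subSmooth δ Γ)^[k] f) x -
          iteratedFDeriv ℝ i ((subSmooth δ Γ)^[k] f) y‖ ≤
        ((r : ℝ) / δ) ^ i * G * ‖x - y‖ := by
  subst hΓ
  exact (stmt8_general k hδ hf hinv).imp_right fun h i _ hik => h i hik
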